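/- Let d ≥ 0 and let J be any group of order 2^{d+1}. Then the direct product J × C₂^{d+1} contains a Hadamard difference set. -/

import Mathlib

/-!
Write `n = d + 1` and `V = 𝔽₂ⁿ`. Since `|J| = |V|`, there is a bijection `φ : J ≃ V` (of sets), and
`D = {(j, x) | φ j ⬝ᵥ x = 1}` is the required set: over the nonzero `φ j` its slices are complements
of the distinct hyperplanes of `V`, and over `φ j = 0` the slice is empty.

The `±1` function attached to `D` is `(j, x) ↦ (-1)^(φ j ⬝ᵥ x)`, whose autocorrelation at `(a, u)` is
`∑ j, (-1)^(φ (a * j) ⬝ᵥ u) * ∑ x, (-1)^((φ (a * j) + φ j) ⬝ᵥ x)`. If `a ≠ 1`, each inner sum runs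
over a nontrivial character of `V` and vanishes (`sum_sgn_dotProduct`); if `a = 1`, the inner sums
all equal `|V|` and the outer sum vanishes for `u ≠ 0` by the same lemma, because `φ` is bijective.
A `±1` function with vanishing autocorrelation off the identity is the sign function of a Hadamard
difference set (`isHadamardDiffSet_of_autocorrelation`).
-/

/-- `D` is a Hadamard difference set in the finite group `G`: for some `k`, `l`,
`D` is a `(v,k,l)`-difference set (every non-identity `g` has exactly `l`
representations `x * y⁻¹` with `x, y ∈ D`) whose parameters satisfy `v = 4 * (k - l)`. -/
def IsHadamardDiffSet {G : Type*} [Group G] (D : Set G) : Prop :=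
  ∃ k l : ℕ,
    Nat.card D = k ∧
    (∀ g : G, g ≠ 1 → Nat.card {p : D × D // (p.1 : G) * (p.2 : G)⁻¹ = g} = l) ∧
    Nat.card G + 4 * l = 4 * k

/-- A group is a Hadamard group if it contains a Hadamard difference set. -/
def IsHadamardGroup (G : Type*) [Group G] : Prop :=
  ∃ D : Set G, IsHadamardDiffSet D

/-- The nontrivial character `t ↦ (-1)^t` of `ZMod 2`, with integer values. -/
def sgn (t : ZMod 2) : ℤ := if t = 1 then -1 else 1

lemma sgn_add (a b : ZMod 2) : sgn (a + b) = sgn a * sgn b := by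
  revert a b; decide

/-- A nontrivial character of `𝔽₂ⁿ` sums to zero. -/
lemma sum_sgn_dotProduct {n : ℕ} (a : Fin n → ZMod 2) (ha : a ≠ 0) :
    ∑ y : Fin n → ZMod 2, sgn (a ⬝ᵥ y) = 0 := by
  obtain ⟨i, hi⟩ := Function.ne_iff.mp ha
  have h1 : a i = 1 := by
    have h : ∀ t : ZMod 2, t ≠ 0 → t = 1 := by decide
    exact h _ hi
  -- Translation by the `i`-th basis vector flips the sign of every term.
  have h := Equiv.sum_comp (Equiv.addRight (Pi.single i (1 : ZMod 2) : Fin n → ZMod 2))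
    (fun y => sgn (a ⬝ᵥ y))
  simp only [Equiv.coe_addRight, dotProduct_add, sgn_add, dotProduct_single, h1, mul_one] at h
  rw [← Finset.sum_mul] at h
  have h2 : sgn 1 = -1 := by decide
  rw [h2] at h
  linarith

open Classical in
/-- If the `±1` function of `D` (`-1` on `D`, `1` off `D`) has zero autocorrelation at every
`g ≠ 1`, then `D` is a Hadamard difference set: the autocorrelation at `g` equals
`|G| - 4 |D| + 4 N(g)`, where `N(g)` counts the representations of `g` as `x * y⁻¹` in `D`. -/
lemma isHadamardDiffSet_of_autocorrelation {G : Type*} [Group G] [Fintype G] [Nontrivial G]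
    (D : Set G)
    (h : ∀ g : G, g ≠ 1 →
      ∑ x : G, (if g * x ∈ D then (-1 : ℤ) else 1) * (if x ∈ D then -1 else 1) = 0) :
    IsHadamardDiffSet D := by
  have key : ∀ g : G, g ≠ 1 →
      Nat.card G + 4 * Nat.card {p : D × D // (p.1 : G) * (p.2 : G)⁻¹ = g} = 4 * Nat.card D := by
    intro g hg
    -- A representation `g = x * y⁻¹` is determined by `y`, subject to `y ∈ D` and `g * y ∈ D`.
    have e : {p : D × D // (p.1 : G) * (p.2 : G)⁻¹ = g} ≃ {x : G // g * x ∈ D ∧ x ∈ D} :=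
      { toFun := fun p => ⟨p.1.2, by
          rw [← mul_inv_eq_iff_eq_mul.mp p.2]
          exact ⟨p.1.1.2, p.1.2.2⟩⟩
        invFun := fun x => ⟨(⟨g * x, x.2.1⟩, ⟨x, x.2.2⟩), by simp⟩
        left_inv := by
          rintro ⟨⟨⟨x, hx⟩, ⟨y, hy⟩⟩, hp⟩
          simp only at hp
          subst hp
          simp
        right_inv := fun x => rfl }
    have hN : (Nat.card {p : D × D // (p.1 : G) * (p.2 : G)⁻¹ = g} : ℤ)
        = ∑ x : G, if g * x ∈ D ∧ x ∈ D then 1 else 0 := by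
      rw [Nat.card_congr e, Nat.card_eq_fintype_card, Fintype.card_subtype]
      simp
    have hk : (Nat.card D : ℤ) = ∑ x : G, if x ∈ D then 1 else 0 := by
      rw [Nat.card_eq_fintype_card]
      simp [Fintype.card_subtype]
    have hk' : (Nat.card D : ℤ) = ∑ x : G, if g * x ∈ D then 1 else 0 := by
      rw [hk]
      exact (Equiv.sum_comp (Equiv.mulLeft g) (fun x => if x ∈ D then (1 : ℤ) else 0)).symm
    have hG : (Nat.card G : ℤ) = ∑ x : G, 1 := by simp
    have hs := h g hg
    have hterm : ∀ x : G,
        (if g * x ∈ D then (-1 : ℤ) else 1) * (if x ∈ D then -1 else 1)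
          = 1 - 2 * (if x ∈ D then 1 else 0) - 2 * (if g * x ∈ D then 1 else 0)
            + 4 * (if g * x ∈ D ∧ x ∈ D then 1 else 0) := by
      intro x
      by_cases h1 : g * x ∈ D <;> by_cases h2 : x ∈ D <;> simp [h1, h2]
    simp only [hterm, Finset.sum_add_distrib, Finset.sum_sub_distrib, ← Finset.mul_sum] at hs
    rw [← hN, ← hk, ← hk', ← hG] at hs
    zify
    linarith
  obtain ⟨g₀, hg₀⟩ := exists_ne (1 : G)
  refine ⟨_, Nat.card {p : D × D // (p.1 : G) * (p.2 : G)⁻¹ = g₀}, rfl, fun g hg => ?_, key g₀ hg₀⟩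
  have h1 := key g hg
  have h2 := key g₀ hg₀
  omega

theorem mcfarland_hyperplane_construction (d : ℕ) (J : Type*) [Group J] [Finite J]
    (hJ : Nat.card J = 2 ^ (d + 1)) :
    IsHadamardGroup (J × Multiplicative (Fin (d + 1) → ZMod 2)) := by
  classical
  have : Fintype J := Fintype.ofFinite J
  have φ : J ≃ (Fin (d + 1) → ZMod 2) :=
    Fintype.equivOfCardEq (by rw [← Nat.card_eq_fintype_card, hJ]; simp)
  have : Nontrivial (Multiplicative (Fin (d + 1) → ZMod 2)) :=
    inferInstanceAs (Nontrivial (Fin (d + 1) → ZMod 2))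
  refine ⟨{p | φ p.1 ⬝ᵥ p.2.toAdd = 1}, isHadamardDiffSet_of_autocorrelation _ ?_⟩
  rintro ⟨a, u⟩ hg
  have hsum : ∑ j : J, sgn (φ (a * j) ⬝ᵥ u.toAdd) *
      ∑ x : Fin (d + 1) → ZMod 2, sgn ((φ (a * j) + φ j) ⬝ᵥ x) = 0 := by
    by_cases ha : a = 1
    · subst ha
      have hu : u.toAdd ≠ 0 := fun h => hg (by
        rw [toAdd_eq_zero] at h
        rw [h]; rfl)
      have h0 : ∀ v : Fin (d + 1) → ZMod 2, v + v = 0 := fun v => CharTwo.add_self_eq_zero v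
      simp only [one_mul, h0, zero_dotProduct]
      rw [← Finset.sum_mul, Equiv.sum_comp φ (fun v => sgn (v ⬝ᵥ u.toAdd))]
      simp only [dotProduct_comm _ u.toAdd]
      rw [sum_sgn_dotProduct _ hu, zero_mul]
    · refine Finset.sum_eq_zero fun j _ => ?_
      rw [sum_sgn_dotProduct, mul_zero]
      intro h
      rw [CharTwo.add_eq_zero] at h
      exact ha (mul_eq_right.mp (φ.injective h))
  rw [← hsum, Fintype.sum_prod_type]
  refine Finset.sum_congr rfl fun j _ => ?_
  rw [Finset.mul_sum]
  refine Fintype.sum_equiv Multiplicative.toAdd _ _ fun x => ?_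
  rw [add_dotProduct, sgn_add, ← mul_assoc, ← sgn_add, ← dotProduct_add]
  simp only [sgn, Set.mem_ofPred_eq, Prod.mk_mul_mk, toAdd_mul]
  congr
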